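/- arXiv:cs/0205011 — 2 statements merged into one kernel-verified Lean document; each statement's English description precedes it below -/
import Mathlib

section
/- Let H be a bipartite graph with parts A and B, both nonempty and with no isolated vertices, and let D be the directed graph built from H with root r. A set F' of edges of H is an edge cover of H if and only if the set of directed edges {a→b : {a,b} ∈ F'} together with all the root edges {r→a : a ∈ A} ∪ {b→r : b ∈ B} strongly connects D. Consequently, the minimum size of an edge cover of H equals the minimum size of a strongly connecting edge set of D minus (|A| + |B|). -/
/-- A set `S` of directed edges strongly connects the vertex set `V`:
for every pair of vertices there is a directed path using only edges of `S`. -/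
def StronglyConnects {V : Type*} (S : Set (V × V)) : Prop :=
  ∀ u v : V, Relation.ReflTransGen (fun a b => (a, b) ∈ S) u v

/-- The edges of the closed walk determined by the vertex list `c`
(consecutive pairs, wrapping around from the last vertex to the first). -/
def cycleEdges {V : Type*} (c : List V) : List (V × V) := c.zip (c.rotate 1)

/-- `c` is a directed cycle of the graph with edge set `E`: a nonempty list of
distinct vertices all of whose consecutive (wrap-around) pairs are edges.
Its length (number of edges) is `c.length`. -/
def IsCycle {V : Type*} (E : Set (V × V)) (c : List V) : Prop :=
  c ≠ [] ∧ c.Nodup ∧ ∀ e ∈ cycleEdges c, e ∈ E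

/-- An edge is redundant if deleting it leaves a strongly connected graph. -/
def Redundant {V : Type*} (E : Set (V × V)) (e : V × V) : Prop :=
  e ∈ E ∧ StronglyConnects (E \ {e})

/-- An edge is necessary if deleting it destroys strong connectivity. -/
def Necessary {V : Type*} (E : Set (V × V)) (e : V × V) : Prop :=
  e ∈ E ∧ ¬ StronglyConnects (E \ {e})

/-- The set of necessary edges. -/
def necessarySet {V : Type*} (E : Set (V × V)) : Set (V × V) :=
  {e | Necessary E e}

/-- An edge `(u, v)` is unsatisfied if there is no directed path from `v`
back to `u` consisting only of necessary edges. -/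
def Unsatisfied {V : Type*} (E : Set (V × V)) (e : V × V) : Prop :=
  e ∈ E ∧ ¬ Relation.ReflTransGen (fun a b => Necessary E (a, b)) e.2 e.1

/-- A redundant edge `r` provides a cycle for an unsatisfied edge `(u, v)` if
there is a directed path from `v` to `u` consisting of necessary edges and `r`. -/
def ProvidesCycle {V : Type*} (E : Set (V × V)) (r : V × V) (e : V × V) : Prop :=
  Relation.ReflTransGen (fun a b => Necessary E (a, b) ∨ (a, b) = r) e.2 e.1

/-- `w` is a cut vertex: deleting `w` disconnects the underlying undirected graph,
i.e. some two vertices distinct from `w` are joined by no undirected path avoiding `w`. -/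
def IsCutVertex {V : Type*} (E : Set (V × V)) (w : V) : Prop :=
  ∃ u v : V, u ≠ w ∧ v ≠ w ∧
    ¬ Relation.ReflTransGen
        (fun a b => a ≠ w ∧ b ≠ w ∧ ((a, b) ∈ E ∨ (b, a) ∈ E)) u v

/-- Vertex set of the digraph `D` built from a bipartite graph with parts `α`, `β`:
the two parts together with a new root vertex. -/
abbrev BVert (α β : Type*) := α ⊕ β ⊕ Unit

/-- The root vertex of `D`. -/
def broot (α β : Type*) : BVert α β := Sum.inr (Sum.inr ())

/-- The edges `r→a` (for `a ∈ A`) and `b→r` (for `b ∈ B`) of `D`. -/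
def rootEdges (α β : Type*) : Set (BVert α β × BVert α β) :=
  {e | (∃ a : α, e = (broot α β, Sum.inl a)) ∨
       (∃ b : β, e = (Sum.inr (Sum.inl b), broot α β))}

/-- The directed edges `a→b` of `D` coming from edges `{a,b}` of the bipartite
graph with edge set `F ⊆ α × β`. -/
def liftEdges {α β : Type*} (F : Set (α × β)) : Set (BVert α β × BVert α β) :=
  {e | ∃ p ∈ F, e = (Sum.inl p.1, Sum.inr (Sum.inl p.2))}

/-- The edge set of the digraph `D` built from the bipartite graph with edge set `F`. -/
def Dedges {α β : Type*} (F : Set (α × β)) : Set (BVert α β × BVert α β) :=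
  liftEdges F ∪ rootEdges α β

/-!
Every arc of `D` leaving `a ∈ A` or entering `b ∈ B` comes from an edge of `H`, so strong
connectivity forces every vertex of `H` to be covered. Conversely, an edge cover together with the
root arcs gives every vertex a path to the root and a path from the root. The only arc of `D`
entering `a` is `r → a` and the only arc leaving `b` is `b → r`, so a strongly connecting arc set
contains all `|A| + |B|` root arcs; removing them is thus a bijection from the strongly connecting
subsets of `D` onto the edge covers of `H`.
-/

namespace StronglyConnects

variable {V : Type*} {S : Set (V × V)} {u v : V}

theorem exists_edge_from (hS : StronglyConnects S) (huv : u ≠ v) : ∃ w, (u, w) ∈ S := by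
  obtain rfl | ⟨w, huw, -⟩ := (hS u v).cases_head
  · exact absurd rfl huv
  · exact ⟨w, huw⟩

theorem exists_edge_to (hS : StronglyConnects S) (huv : u ≠ v) : ∃ w, (w, v) ∈ S := by
  obtain rfl | ⟨w, -, hwv⟩ := (hS u v).cases_tail
  · exact absurd rfl huv
  · exact ⟨w, hwv⟩

end StronglyConnects

/-- `F` is an edge cover of a bipartite graph with parts `α`, `β`: every vertex of either
part is an endpoint of an edge in `F`, an edge `{a, b}` being encoded as the pair `(a, b)`. -/
def IsEdgeCover {α β : Type*} (F : Set (α × β)) : Prop :=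
  (∀ a : α, ∃ b : β, (a, b) ∈ F) ∧ (∀ b : β, ∃ a : α, (a, b) ∈ F)

section Dedges

variable {α β : Type*} {F G : Set (α × β)} {S : Set (BVert α β × BVert α β)} {a : α} {b : β}
  {w : BVert α β}

theorem inl_left_mem_Dedges_iff :
    (Sum.inl a, w) ∈ Dedges F ↔ ∃ b, (a, b) ∈ F ∧ w = Sum.inr (Sum.inl b) := by
  simp [Dedges, liftEdges, rootEdges, broot]

theorem inr_inl_right_mem_Dedges_iff :
    (w, Sum.inr (Sum.inl b)) ∈ Dedges F ↔ ∃ a, (a, b) ∈ F ∧ w = Sum.inl a := by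
  simp [Dedges, liftEdges, rootEdges, broot]

theorem inl_right_mem_Dedges_iff : (w, Sum.inl a) ∈ Dedges F ↔ w = broot α β := by
  simp [Dedges, liftEdges, rootEdges, broot]

theorem inr_inl_left_mem_Dedges_iff :
    (Sum.inr (Sum.inl b), w) ∈ Dedges F ↔ w = broot α β := by
  simp [Dedges, liftEdges, rootEdges, broot]

theorem Dedges_mono (h : F ⊆ G) : Dedges F ⊆ Dedges G :=
  Set.union_subset_union_left _ fun _ ⟨p, hp, he⟩ => ⟨p, h hp, he⟩

theorem IsEdgeCover.stronglyConnects_Dedges (hF : IsEdgeCover F) :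
    StronglyConnects (Dedges F) := by
  have to_root (u : BVert α β) :
      Relation.ReflTransGen (fun x y => (x, y) ∈ Dedges F) u (broot α β) := by
    rcases u with a | b | ⟨⟩
    · obtain ⟨b, hab⟩ := hF.1 a
      exact .head (inl_left_mem_Dedges_iff.2 ⟨b, hab, rfl⟩)
        (.single (inr_inl_left_mem_Dedges_iff.2 rfl))
    · exact .single (inr_inl_left_mem_Dedges_iff.2 rfl)
    · exact .refl
  have from_root (v : BVert α β) :
      Relation.ReflTransGen (fun x y => (x, y) ∈ Dedges F) (broot α β) v := by
    rcases v with a | b | ⟨⟩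
    · exact .single (inl_right_mem_Dedges_iff.2 rfl)
    · obtain ⟨a, hab⟩ := hF.2 b
      exact .head (inl_right_mem_Dedges_iff.2 rfl)
        (.single (inl_left_mem_Dedges_iff.2 ⟨b, hab, rfl⟩))
    · exact .refl
  exact fun u v => (to_root u).trans (from_root v)

theorem StronglyConnects.isEdgeCover (h : StronglyConnects (Dedges F)) : IsEdgeCover F := by
  refine ⟨fun a => ?_, fun b => ?_⟩
  · obtain ⟨w, hw⟩ := h.exists_edge_from (u := Sum.inl a) (v := broot α β) Sum.inl_ne_inr
    obtain ⟨b, hab, -⟩ := inl_left_mem_Dedges_iff.1 hw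
    exact ⟨b, hab⟩
  · obtain ⟨w, hw⟩ := h.exists_edge_to (u := broot α β) (v := Sum.inr (Sum.inl b)) (by simp [broot])
    obtain ⟨a, hab, -⟩ := inr_inl_right_mem_Dedges_iff.1 hw
    exact ⟨a, hab⟩

theorem isEdgeCover_iff_stronglyConnects_Dedges :
    IsEdgeCover F ↔ StronglyConnects (Dedges F) :=
  ⟨IsEdgeCover.stronglyConnects_Dedges, StronglyConnects.isEdgeCover⟩

theorem StronglyConnects.rootEdges_subset (hS : StronglyConnects S) (hSF : S ⊆ Dedges F) :
    rootEdges α β ⊆ S := by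
  rintro _ (⟨a, rfl⟩ | ⟨b, rfl⟩)
  · obtain ⟨w, hw⟩ := hS.exists_edge_to (u := broot α β) (v := Sum.inl a) Sum.inr_ne_inl
    obtain rfl := inl_right_mem_Dedges_iff.1 (hSF hw)
    exact hw
  · obtain ⟨w, hw⟩ := hS.exists_edge_from (u := Sum.inr (Sum.inl b)) (v := broot α β)
      (by simp [broot])
    obtain rfl := inr_inl_left_mem_Dedges_iff.1 (hSF hw)
    exact hw

theorem exists_Dedges_eq (hroot : rootEdges α β ⊆ S) (hSF : S ⊆ Dedges F) :
    ∃ F' ⊆ F, Dedges F' = S := by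
  refine ⟨{p ∈ F | (Sum.inl p.1, Sum.inr (Sum.inl p.2)) ∈ S}, Set.sep_subset _ _,
    Set.Subset.antisymm (Set.union_subset ?_ hroot) fun e he => ?_⟩
  · rintro _ ⟨p, hp, rfl⟩
    exact hp.2
  · obtain ⟨p, hp, rfl⟩ | he_root := hSF he
    · exact .inl ⟨p, ⟨hp, he⟩, rfl⟩
    · exact .inr he_root

variable (F) in
theorem image_Dedges_isEdgeCover :
    Dedges '' {F' | F' ⊆ F ∧ IsEdgeCover F'} = {S | S ⊆ Dedges F ∧ StronglyConnects S} := by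
  ext S
  constructor
  · rintro ⟨F', ⟨hF', hcover⟩, rfl⟩
    exact ⟨Dedges_mono hF', hcover.stronglyConnects_Dedges⟩
  · rintro ⟨hSF, hS⟩
    obtain ⟨F', hF', rfl⟩ := exists_Dedges_eq (hS.rootEdges_subset hSF) hSF
    exact ⟨F', ⟨hF', hS.isEdgeCover⟩, rfl⟩

variable (F) in
theorem encard_liftEdges : (liftEdges F).encard = F.encard := by
  have himage : liftEdges F = Prod.map Sum.inl (Sum.inr ∘ Sum.inl) '' F := by
    ext e
    simp only [liftEdges, Set.mem_ofPred_eq, Set.mem_image, eq_comm (a := e), Prod.map_apply',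
      Function.comp_apply]
  rw [himage]
  exact (Sum.inl_injective.prodMap (Sum.inr_injective.comp Sum.inl_injective)).encard_image F

variable (α β) in
theorem encard_rootEdges : (rootEdges α β).encard = ENat.card α + ENat.card β := by
  let arc : α ⊕ β → BVert α β × BVert α β :=
    Sum.elim (fun a => (broot α β, Sum.inl a)) (fun b => (Sum.inr (Sum.inl b), broot α β))
  have hrange : rootEdges α β = arc '' Set.univ := by
    ext e
    simp only [rootEdges, arc, Set.mem_ofPred_eq, Set.image_univ, Set.mem_range, Sum.exists,
      Sum.elim_inl, Sum.elim_inr, eq_comm (a := e)]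
  have harc : Function.Injective arc := by
    refine Function.Injective.sumElim ?_ ?_ ?_ <;> simp [Function.Injective, broot]
  rw [hrange, harc.encard_image, Set.encard_univ, ENat.card_sum]

variable (F) in
theorem encard_Dedges : (Dedges F).encard = F.encard + (ENat.card α + ENat.card β) := by
  have hdisj : Disjoint (liftEdges F) (rootEdges α β) := by
    rw [Set.disjoint_left]
    rintro _ ⟨p, -, rfl⟩
    simp [rootEdges, broot]
  rw [Dedges, Set.encard_union_eq hdisj, encard_liftEdges, encard_rootEdges]

end Dedges

theorem toNat_sInf_encard_image {ι : Type*} [Finite ι] (C : Set (Set ι)) :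
    (sInf (Set.encard '' C)).toNat = sInf (Set.ncard '' C) := by
  have hcast (s : Set ι) : s.encard = (s.ncard : ℕ∞) := s.toFinite.cast_ncard_eq.symm
  simp only [sInf_image', hcast, ENat.iInf_toNat]

theorem sInf_ncard_image_eq_sub {ι κ : Type*} [Finite ι] [Finite κ] {C : Set (Set ι)}
    {C' : Set (Set κ)} {c : ℕ} (h : sInf (Set.encard '' C) + c = sInf (Set.encard '' C')) :
    sInf (Set.ncard '' C) = sInf (Set.ncard '' C') - c := by
  rw [← toNat_sInf_encard_image, ← toNat_sInf_encard_image, ← h]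
  cases sInf (Set.encard '' C) with
  -- `C` is empty, so both infima over `ℕ` are the junk value `0`.
  | top => simp
  | coe n => exact (Nat.add_sub_cancel n c).symm

theorem edge_cover_iff_scss_general {α β : Type*} (F : Set (α × β)) :
    (∀ F' : Set (α × β), IsEdgeCover F' ↔ StronglyConnects (Dedges F')) ∧
    sInf (Set.encard '' {F' | F' ⊆ F ∧ IsEdgeCover F'}) + (ENat.card α + ENat.card β) =
      sInf (Set.encard '' {S | S ⊆ Dedges F ∧ StronglyConnects S}) := by
  refine ⟨fun F' => isEdgeCover_iff_stronglyConnects_Dedges, ?_⟩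
  rw [← image_Dedges_isEdgeCover, Set.image_image, ENat.sInf_add]
  simp only [encard_Dedges, iInf_image, sInf_image]

/-- For a bipartite graph `H` with both parts nonempty and no
isolated vertices, a set `F' ⊆ F` of edges of `H` is an edge cover of `H` iff
the corresponding directed edges together with all root edges strongly connect
`D`; consequently, the minimum size of an edge cover of `H` equals the minimum
size of a strongly connecting edge set of `D` minus `|A| + |B|`. -/
theorem edge_cover_iff_scss {α β : Type*} [Fintype α] [Fintype β]
    (F : Set (α × β))
    (hA : Nonempty α) (hB : Nonempty β)
    (hisoA : ∀ a : α, ∃ b : β, (a, b) ∈ F)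
    (hisoB : ∀ b : β, ∃ a : α, (a, b) ∈ F) :
    (∀ F' ⊆ F,
      (((∀ a : α, ∃ b : β, (a, b) ∈ F') ∧ (∀ b : β, ∃ a : α, (a, b) ∈ F')) ↔
        StronglyConnects (liftEdges F' ∪ rootEdges α β))) ∧
    sInf {n : ℕ | ∃ F' : Set (α × β), F' ⊆ F ∧
        (∀ a : α, ∃ b : β, (a, b) ∈ F') ∧ (∀ b : β, ∃ a : α, (a, b) ∈ F') ∧
        F'.ncard = n} =
      sInf {n : ℕ | ∃ S : Set (BVert α β × BVert α β), S ⊆ Dedges F ∧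
          StronglyConnects S ∧ S.ncard = n} -
        (Fintype.card α + Fintype.card β) := by
  obtain ⟨hiff, hmin⟩ := edge_cover_iff_scss_general F
  rw [ENat.card_eq_coe_fintype_card, ENat.card_eq_coe_fintype_card, ← Nat.cast_add] at hmin
  refine ⟨fun F' _ => hiff F', ?_⟩
  simpa only [IsEdgeCover, Set.image, Set.mem_ofPred_eq, and_assoc] using
    sInf_ncard_image_eq_sub hmin
end

section
/- Let k ≥ 5 be an integer, and let OPT, OPT_H, n and n_4, n_5, …, n_k be real numbers satisfying: OPT > n − 1, OPT ≥ ((i−1)/(i−2))·(n_i − 1) for every integer i with 4 ≤ i ≤ k, OPT ≥ OPT_H ≥ 0, OPT_H ≤ 2·(n_4 − 1), and OPT > 0. Then (k/(k−1))·(n − n_k) + Σ_{i=4}^{k−1} (i/(i−1))·(n_{i+1} − n_i) + OPT_H < (π²/6 − 1/36 + 1/(k(k−1)))·OPT. -/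
/-! A vertex removed by contracting a cycle of length at least `i` costs at most `i / (i - 1)`
edges. Summation by parts moves the differences from the vertex counts `a i` to these ratios, whose
decrements are `1 / (i (i - 1))`. The lower bound on `OPT` in terms of `a (i + 1) - 1` turns each
decrement into at most `OPT / i ^ 2`, and the tail bound `1 / k ≤ ∑_{i ≥ k} 1 / i ^ 2` absorbs the
`1 / k` in `k / (k - 1) = 1 + 1 / k + 1 / (k (k - 1))`, the ratio for the longest cycles. The
boundary term `-(4 / 3) (a 4 - 1)` of the summation by parts is compensated by averaging the two
upper bounds on `OPTH` with weights `2 / 3` and `1 / 3`. The constant is then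
`1 + 1 / 3 - (1 + 1 / 4 + 1 / 9) = -1 / 36`, up to `π ^ 2 / 6` and `1 / (k (k - 1))`.
-/

open Finset Filter

theorem sum_Ico_mul_sub_eq {R : Type*} [Ring R] (c x : ℕ → R) {m k : ℕ} (hmk : m ≤ k) :
    ∑ i ∈ Ico m k, c i * (x (i + 1) - x i) =
      c k * x k - c m * x m - ∑ i ∈ Ico m k, (c (i + 1) - c i) * x (i + 1) := by
  rw [← sum_Ico_sub (fun i ↦ c i * x i) hmk, ← sum_sub_distrib]
  exact sum_congr rfl fun i _ ↦ by noncomm_ring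

section Field

variable {K : Type*} [Field K]

/-- An upper bound for the number of edges selected by contracting first the cycles of length at
least `k`, then those of length `k - 1`, …, `m`. Here `n` is the initial number of vertices and
`a i` the number left once all cycles of length at least `i` are contracted; contracting a cycle of
length `i` selects `i` edges and removes `i - 1` vertices. -/
def contractionCost (m k : ℕ) (n : K) (a : ℕ → K) : K :=
  (k : K) / ((k : K) - 1) * (n - a k) +
    ∑ i ∈ Ico m k, (i : K) / ((i : K) - 1) * (a (i + 1) - a i)

theorem contractionCost_eq [CharZero K] {m k : ℕ} (hm : 2 ≤ m) (hmk : m ≤ k) (n : K)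
    (a : ℕ → K) :
    contractionCost m k n a =
      (k : K) / (k - 1) * (n - 1) - (m : K) / (m - 1) * (a m - 1) +
        ∑ i ∈ Ico m k, 1 / ((i : K) * (i - 1)) * (a (i + 1) - 1) := by
  have ratio_sub : ∀ i ∈ Ico m k,
      (((i + 1 : ℕ) : K) / ((i + 1 : ℕ) - 1) - (i : K) / (i - 1)) * (a (i + 1) - 1) =
        -(1 / ((i : K) * (i - 1)) * (a (i + 1) - 1)) := fun i hi ↦ by
    have hi2 : 2 ≤ i := hm.trans (mem_Ico.1 hi).1
    have hi0 : (i : K) ≠ 0 := Nat.cast_ne_zero.2 (by lia)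
    have hi1 : (i : K) - 1 ≠ 0 := sub_ne_zero.2 (Nat.cast_ne_one.2 (by lia))
    push_cast
    rw [add_sub_cancel_right]
    field_simp
    ring
  have by_parts :=
    sum_Ico_mul_sub_eq (fun i : ℕ ↦ (i : K) / ((i : K) - 1)) (fun i ↦ a i - 1) hmk
  simp only [sub_sub_sub_cancel_right] at by_parts
  rw [contractionCost, by_parts, sum_congr rfl ratio_sub, sum_neg_distrib]
  ring

variable [LinearOrder K] [IsStrictOrderedRing K]

theorem contractionCost_le {m k : ℕ} (hm : 2 ≤ m) (hmk : m ≤ k) (n : K) {a : ℕ → K} {opt : K}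
    (ha : ∀ i ∈ Ico m k, (i : K) / (i - 1) * (a (i + 1) - 1) ≤ opt) :
    contractionCost m k n a ≤
      (k : K) / (k - 1) * (n - 1) - (m : K) / (m - 1) * (a m - 1) +
        (∑ i ∈ Ico m k, 1 / (i : K) ^ 2) * opt := by
  rw [contractionCost_eq hm hmk, sum_mul]
  refine add_le_add_right (sum_le_sum fun i hi ↦ ?_) _
  have hi2 : (2 : K) ≤ i := by exact_mod_cast hm.trans (mem_Ico.1 hi).1
  have hi0 : (i : K) ≠ 0 := by linarith
  calc 1 / ((i : K) * (i - 1)) * (a (i + 1) - 1)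
      = 1 / (i : K) ^ 2 * ((i : K) / (i - 1) * (a (i + 1) - 1)) := by field_simp
    _ ≤ 1 / (i : K) ^ 2 * opt := by gcongr; exact ha i hi

theorem one_div_sub_one_div_le_sum_Ico_one_div_sq {m k : ℕ} (hm : 0 < m) (hmk : m ≤ k) :
    1 / (m : K) - 1 / k ≤ ∑ i ∈ Ico m k, 1 / (i : K) ^ 2 := by
  calc 1 / (m : K) - 1 / k
      = ∑ i ∈ Ico m k, (1 / (i : K) - 1 / ((i + 1 : ℕ) : K)) := by
        simpa only [neg_sub_neg] using (sum_Ico_sub (fun i : ℕ ↦ -(1 / (i : K))) hmk).symm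
    _ ≤ ∑ i ∈ Ico m k, 1 / (i : K) ^ 2 := by
        gcongr with i hi
        have hi0 : (0 : K) < i := by exact_mod_cast hm.trans_le (mem_Ico.1 hi).1
        calc 1 / (i : K) - 1 / ((i + 1 : ℕ) : K) = 1 / ((i : K) * (i + 1)) := by
              push_cast
              field_simp
              ring
          _ ≤ 1 / (i : K) ^ 2 := by
              gcongr
              nlinarith

end Field

theorem sum_range_one_div_sq_add_one_div_le {m : ℕ} (hm : 0 < m) :
    ∑ i ∈ range m, 1 / (i : ℝ) ^ 2 + 1 / m ≤ Real.pi ^ 2 / 6 := by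
  have tendsto_partial_sums :=
    hasSum_zeta_two.tendsto_sum_nat.add tendsto_one_div_atTop_nhds_zero_nat
  rw [add_zero] at tendsto_partial_sums
  refine ge_of_tendsto tendsto_partial_sums ?_
  filter_upwards [eventually_ge_atTop m] with k hk
  rw [← sum_range_add_sum_Ico _ hk]
  linarith [one_div_sub_one_div_le_sum_Ico_one_div_sq (K := ℝ) hm hk]

theorem div_sub_one_add_sum_Ico_one_div_sq_le {m k : ℕ} (hk : 2 ≤ k) (hmk : m ≤ k) :
    (k : ℝ) / (k - 1) + ∑ i ∈ Ico m k, 1 / (i : ℝ) ^ 2 ≤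
      Real.pi ^ 2 / 6 + 1 - ∑ i ∈ range m, 1 / (i : ℝ) ^ 2 + 1 / ((k : ℝ) * (k - 1)) := by
  have hk2 : (2 : ℝ) ≤ k := by exact_mod_cast hk
  have hk0 : (k : ℝ) ≠ 0 := by linarith
  have hk1 : (k : ℝ) - 1 ≠ 0 := by linarith
  have ratio_eq : (k : ℝ) / (k - 1) = 1 + 1 / k + 1 / (k * (k - 1)) := by
    field_simp
    ring
  have basel := sum_range_one_div_sq_add_one_div_le (m := k) (by lia)
  rw [← sum_range_add_sum_Ico _ hmk] at basel
  linarith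

theorem contractionCost_add_lt {m k : ℕ} (hm : 2 ≤ m) (hmk : m ≤ k) {n opt : ℝ} {a : ℕ → ℝ}
    (hopt : 0 ≤ opt) (hn : n - 1 < opt)
    (ha : ∀ i ∈ Ico m k, (i : ℝ) / (i - 1) * (a (i + 1) - 1) ≤ opt) :
    contractionCost m k n a + (m : ℝ) / (m - 1) * (a m - 1) <
      (Real.pi ^ 2 / 6 + 1 - ∑ i ∈ range m, 1 / (i : ℝ) ^ 2 + 1 / ((k : ℝ) * (k - 1))) * opt := by
  have hk2 : (2 : ℝ) ≤ k := by exact_mod_cast hm.trans hmk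
  have ratio_pos : 0 < (k : ℝ) / (k - 1) := div_pos (by linarith) (by linarith)
  calc contractionCost m k n a + (m : ℝ) / (m - 1) * (a m - 1)
      ≤ (k : ℝ) / (k - 1) * (n - 1) + (∑ i ∈ Ico m k, 1 / (i : ℝ) ^ 2) * opt := by
        linarith [contractionCost_le hm hmk n ha]
    _ < (k : ℝ) / (k - 1) * opt + (∑ i ∈ Ico m k, 1 / (i : ℝ) ^ 2) * opt := by gcongr
    _ = ((k : ℝ) / (k - 1) + ∑ i ∈ Ico m k, 1 / (i : ℝ) ^ 2) * opt := by ring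
    _ ≤ _ :=
        mul_le_mul_of_nonneg_right
          (div_sub_one_add_sum_Ico_one_div_sq_le (hm.trans hmk) hmk) hopt

/-- the analytic core of the performance-guarantee analysis of the
modified cycle-contraction algorithm: under the stated bounds relating `OPT`,
`OPT_H`, `n` and `n_4, …, n_k`, the number of edges returned is less than
`(π²/6 − 1/36 + 1/(k(k−1)))·OPT`. -/
theorem contraction_performance_bound (k : ℕ) (hk : 5 ≤ k)
    (OPT OPTH n : ℝ) (a : ℕ → ℝ)
    (h1 : n - 1 < OPT)
    (h2 : ∀ i : ℕ, 4 ≤ i → i ≤ k → (((i : ℝ) - 1) / ((i : ℝ) - 2)) * (a i - 1) ≤ OPT)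
    (h3 : OPTH ≤ OPT) (h4 : 0 ≤ OPTH) (h5 : OPTH ≤ 2 * (a 4 - 1)) (h6 : 0 < OPT) :
    ((k : ℝ) / ((k : ℝ) - 1)) * (n - a k) +
        ∑ i ∈ Finset.Ico 4 k, ((i : ℝ) / ((i : ℝ) - 1)) * (a (i + 1) - a i) + OPTH <
      (Real.pi ^ 2 / 6 - 1 / 36 + 1 / ((k : ℝ) * ((k : ℝ) - 1))) * OPT := by
  have opt_bound : ∀ i ∈ Ico 4 k, (i : ℝ) / (i - 1) * (a (i + 1) - 1) ≤ OPT := fun i hi ↦ by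
    obtain ⟨hi4, hik⟩ := mem_Ico.1 hi
    convert h2 (i + 1) (by lia) hik using 3 <;> push_cast <;> ring
  have cost_lt := contractionCost_add_lt (by lia) (by lia : 4 ≤ k) h6.le h1 opt_bound
  have sum_range_four : ∑ i ∈ range 4, 1 / (i : ℝ) ^ 2 = 49 / 36 := by
    norm_num [sum_range_succ]
  have final_cost : OPTH ≤ 4 / 3 * (a 4 - 1) + 1 / 3 * OPT := by linarith
  have ratio_four : ((4 : ℕ) : ℝ) / ((4 : ℕ) - 1) = 4 / 3 := by norm_num
  rw [sum_range_four, ratio_four] at cost_lt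
  change contractionCost 4 k n a + OPTH < _
  linarith
end
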